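/- For every prime number p > 5, the polynomial P_5 reduced modulo p has exactly 16 critical points over an algebraic closure of 𝔽_p; that is, the set of pairs (a,b) ∈ (𝔽̄_p)² at which both partial derivatives ∂P_5/∂x_1 and ∂P_5/∂x_2 vanish has exactly 16 elements. -/

import Mathlib

/-!
Up to the factor `5`, the two partial derivatives of `P5` are
`F = x⁴ - 3x²y - y³ + 2xy + y² + 2x - 1` and the polynomial `G` obtained by exchanging `x` and `y`.
On the diagonal both become `(x² - x - 1)(x² - 3x + 1)`. Off the diagonal, writing `s = x + y` and
`m = xy`, one has `F - G = (x - y)(s + 2)(s² - s + 1 - 2m)`. If `s = -2`, then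
`F + G = 2(m² - 7m + 11)`; if `2m = s² - s + 1`, then `-2(F + G) = (s² - s - 1)(s² + s - 1)`.

Let `φ` be a root of `X² - X - 1`; the other root is `1 - φ`. The diagonal critical points have
`x ∈ {φ, 1 - φ, 1 + φ, 2 - φ}`, and the others lie over six values of `(s, m)`, each of which has
nonzero discriminant `s² - 4m` and hence comes from exactly two ordered pairs. This gives
`4 + 6 · 2 = 16` points, and the inequalities that make them distinct only use that `2`, `3`
and `5` are invertible.
-/

open MvPolynomial

/-- The degree-5 generalized Chebyshev polynomial `P_5(x_1,x_2)` as a polynomial in two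
variables with coefficients in a field `K`. -/
noncomputable def P5 (K : Type*) [Field K] : MvPolynomial (Fin 2) K :=
  X 0 ^ 5 + X 1 ^ 5 - 5 * X 0 * X 1 * (X 0 ^ 2 + X 1 ^ 2)
    + 5 * X 0 * X 1 * (X 0 + X 1) + 5 * (X 0 ^ 2 + X 1 ^ 2) - 5 * (X 0 + X 1)

lemma critical_iff {K : Type*} [Field K] (h5 : (5 : K) ≠ 0) (x y : K) :
    (eval ![x, y] (pderiv 0 (P5 K)) = 0 ∧ eval ![x, y] (pderiv 1 (P5 K)) = 0) ↔
      (x ^ 4 - 3 * x ^ 2 * y - y ^ 3 + 2 * x * y + y ^ 2 + 2 * x - 1 = 0 ∧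
        y ^ 4 - 3 * y ^ 2 * x - x ^ 3 + 2 * x * y + x ^ 2 + 2 * y - 1 = 0) := by
  have h5X : ∀ i, pderiv i (5 : MvPolynomial (Fin 2) K) = 0 := fun i =>
    (pderiv i).map_natCast 5
  have e0 : eval ![x, y] (pderiv 0 (P5 K)) =
      5 * (x ^ 4 - 3 * x ^ 2 * y - y ^ 3 + 2 * x * y + y ^ 2 + 2 * x - 1) := by
    simp [P5, pderiv_X, Derivation.leibniz, Derivation.leibniz_pow, h5X]
    ring
  have e1 : eval ![x, y] (pderiv 1 (P5 K)) =
      5 * (y ^ 4 - 3 * y ^ 2 * x - x ^ 3 + 2 * x * y + x ^ 2 + 2 * y - 1) := by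
    simp [P5, pderiv_X, Derivation.leibniz, Derivation.leibniz_pow, h5X]
    ring
  rw [e0, e1]
  simp [h5]

/-- The values `(x + y, x * y)` taken at the critical points with `x ≠ y`. -/
def offDiagValues {K : Type*} [Field K] [DecidableEq K] (φ : K) : Finset (K × K) :=
  {(-2, 3 + φ), (-2, 4 - φ), (φ, 1), (1 - φ, 1), (-φ, 1 + φ), (φ - 1, 2 - φ)}

/-- The abscissae of the critical points with `x = y`. -/
def diagValues {K : Type*} [Field K] [DecidableEq K] (φ : K) : Finset K :=
  {φ, 1 - φ, 1 + φ, 2 - φ}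

lemma card_diagValues {K : Type*} [Field K] [DecidableEq K] (h2 : (2 : K) ≠ 0)
    (h5 : (5 : K) ≠ 0) {φ : K} (hφ : φ ^ 2 = φ + 1) : (diagValues φ).card = 4 := by
  have a1 : φ ≠ 1 - φ := by grind
  have a2 : φ ≠ 1 + φ := by grind
  have a3 : φ ≠ 2 - φ := by grind
  have a4 : 1 - φ ≠ 1 + φ := by grind
  have a5 : 1 - φ ≠ 2 - φ := by grind
  have a6 : 1 + φ ≠ 2 - φ := by grind
  simp only [diagValues]
  repeat rw [Finset.card_insert_of_notMem (by
    simp only [Finset.mem_insert, Finset.mem_singleton]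
    tauto)]
  simp

lemma card_offDiagValues {K : Type*} [Field K] [DecidableEq K] (h2 : (2 : K) ≠ 0)
    (h5 : (5 : K) ≠ 0) {φ : K} (hφ : φ ^ 2 = φ + 1) : (offDiagValues φ).card = 6 := by
  have a0 : (3 : K) + φ ≠ 4 - φ := by grind
  have a1 : -2 ≠ φ := by grind
  have a2 : -2 ≠ 1 - φ := by grind
  have a3 : -2 ≠ -φ := by grind
  have a4 : -2 ≠ φ - 1 := by grind
  have a5 : φ ≠ 1 - φ := by grind
  have a6 : φ ≠ -φ := by grind
  have a7 : φ ≠ φ - 1 := by grind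
  have a8 : 1 - φ ≠ -φ := by grind
  have a9 : 1 - φ ≠ φ - 1 := by grind
  have a10 : -φ ≠ φ - 1 := by grind
  simp only [offDiagValues]
  repeat rw [Finset.card_insert_of_notMem (by
    simp only [Finset.mem_insert, Finset.mem_singleton, Prod.mk.injEq]
    tauto)]
  simp

lemma disc_ne_zero {K : Type*} [Field K] [DecidableEq K] (h2 : (2 : K) ≠ 0) (h3 : (3 : K) ≠ 0)
    (h5 : (5 : K) ≠ 0) {φ : K} (hφ : φ ^ 2 = φ + 1) {t : K × K} (ht : t ∈ offDiagValues φ) :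
    t.1 ^ 2 - 4 * t.2 ≠ 0 := by
  have h4 : (4 : K) ≠ 0 := by
    rw [show (4 : K) = 2 * 2 by norm_num]
    exact mul_ne_zero h2 h2
  simp only [offDiagValues, Finset.mem_insert, Finset.mem_singleton] at ht
  rcases ht with rfl | rfl | rfl | rfl | rfl | rfl <;> dsimp only
  · have : φ ≠ -2 := by grind
    grind
  · have : φ ≠ 3 := by grind
    grind
  · grind
  · grind
  · have : φ ≠ -1 := by grind
    grind
  · have : φ ≠ 2 := by grind
    grind

/-- Over a nonzero discriminant, a prescribed sum and product come from exactly two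
ordered pairs. -/
lemma exists_fiber {K : Type*} [Field K] [IsAlgClosed K] [DecidableEq K] (h2 : (2 : K) ≠ 0)
    (t : K × K) (ht : t.1 ^ 2 - 4 * t.2 ≠ 0) :
    ∃ A : Finset (K × K), A.card = 2 ∧ ∀ q : K × K, q ∈ A ↔ (q.1 + q.2, q.1 * q.2) = t := by
  obtain ⟨s, m⟩ := t
  dsimp only at ht
  obtain ⟨r, hr⟩ := IsAlgClosed.exists_pow_nat_eq (s ^ 2 - 4 * m) (n := 2) (by norm_num)
  have hr0 : r ≠ 0 := by grind
  obtain ⟨a, ha⟩ : ∃ a, 2 * a = s + r := ⟨(s + r) / 2, by field_simp⟩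
  have hm : m = a * (s - a) := by
    have : (2 * 2) * m = (2 * 2) * (a * (s - a)) := by grind
    exact mul_left_cancel₀ (mul_ne_zero h2 h2) this
  have hne : a ≠ s - a := by grind
  refine ⟨{(a, s - a), (s - a, a)}, ?_, ?_⟩
  · rw [Finset.card_pair]
    simp [hne]
  · rintro ⟨x, y⟩
    simp only [Finset.mem_insert, Finset.mem_singleton, Prod.mk.injEq]
    constructor
    · rintro (⟨rfl, rfl⟩ | ⟨rfl, rfl⟩)
      · exact ⟨by ring, hm.symm⟩
      · exact ⟨by ring, by rw [hm]; ring⟩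
    · rintro ⟨h, h'⟩
      have : (x - a) * (x - (s - a)) = 0 := by grind
      rcases mul_eq_zero.mp this with h0 | h0
      · left; constructor <;> grind
      · right; constructor <;> grind

/-- The critical equations solved on the diagonal and, through the sum and product of the
coordinates, off the diagonal. -/
lemma critical_solve {K : Type*} [Field K] [DecidableEq K] (h2 : (2 : K) ≠ 0)
    (h3 : (3 : K) ≠ 0) (h5 : (5 : K) ≠ 0) {φ : K} (hφ : φ ^ 2 = φ + 1) (x y : K) :
    (x ^ 4 - 3 * x ^ 2 * y - y ^ 3 + 2 * x * y + y ^ 2 + 2 * x - 1 = 0 ∧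
        y ^ 4 - 3 * y ^ 2 * x - x ^ 3 + 2 * x * y + x ^ 2 + 2 * y - 1 = 0) ↔
      (x = y ∧ x ∈ diagValues φ) ∨ (x + y, x * y) ∈ offDiagValues φ := by
  by_cases hxy : x = y
  · subst hxy
    have hoff : (x + x, x * x) ∉ offDiagValues φ := fun h =>
      disc_ne_zero h2 h3 h5 hφ h (by ring)
    have hfac : x ^ 4 - 3 * x ^ 2 * x - x ^ 3 + 2 * x * x + x ^ 2 + 2 * x - 1 =
        (x - φ) * ((x - (1 - φ)) * ((x - (1 + φ)) * (x - (2 - φ)))) := by grind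
    simp only [hoff, and_self, or_false, true_and, hfac, mul_eq_zero, diagValues,
      Finset.mem_insert, Finset.mem_singleton, sub_eq_zero]
  · have hxy' : x - y ≠ 0 := sub_ne_zero.mpr hxy
    have key : (x ^ 4 - 3 * x ^ 2 * y - y ^ 3 + 2 * x * y + y ^ 2 + 2 * x - 1 = 0 ∧
        y ^ 4 - 3 * y ^ 2 * x - x ^ 3 + 2 * x * y + x ^ 2 + 2 * y - 1 = 0) ↔
        ((x + y + 2) * ((x + y) ^ 2 - (x + y) + 1 - 2 * (x * y)) = 0 ∧
          (x + y) ^ 4 - 4 * (x + y) ^ 2 * (x * y) + 2 * (x * y) ^ 2 - (x + y) ^ 3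
            + 2 * (x * y) + (x + y) ^ 2 + 2 * (x + y) - 2 = 0) := by
      constructor
      · rintro ⟨hF, hG⟩
        exact ⟨mul_left_cancel₀ hxy' (by linear_combination hF - hG),
          by linear_combination hF + hG⟩
      · rintro ⟨hD, hS⟩
        exact ⟨mul_left_cancel₀ h2 (by linear_combination hS + (x - y) * hD),
          mul_left_cancel₀ h2 (by linear_combination hS - (x - y) * hD)⟩
    rw [key]
    generalize x + y = s
    generalize x * y = m
    simp only [hxy, false_and, false_or, offDiagValues, Finset.mem_insert, Finset.mem_singleton,
      Prod.mk.injEq]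
    constructor
    · rintro ⟨hD, hS⟩
      rcases mul_eq_zero.mp hD with h | h
      · have hs : s = -2 := by linear_combination h
        subst hs
        have : 2 * ((m - (3 + φ)) * (m - (4 - φ))) = 0 := by linear_combination hS - 2 * hφ
        grind
      · have h4 : (s - φ) * ((s - (1 - φ)) * ((s + φ) * (s - (φ - 1)))) = 0 := by
          have : s ^ 4 - 3 * s ^ 2 + 1 = 0 := by grind
          grind
        have hm : ∀ n, s ^ 2 - s + 1 = 2 * n → m = n := fun n hn =>
          mul_left_cancel₀ h2 (by linear_combination hn - h)
        rcases mul_eq_zero.mp h4 with h' | h'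
        · have := hm 1 (by grind)
          grind
        rcases mul_eq_zero.mp h' with h' | h'
        · have := hm 1 (by grind)
          grind
        rcases mul_eq_zero.mp h' with h' | h'
        · have := hm (1 + φ) (by grind)
          grind
        · have := hm (2 - φ) (by grind)
          grind
    · rintro (⟨rfl, rfl⟩ | ⟨rfl, rfl⟩ | ⟨rfl, rfl⟩ | ⟨rfl, rfl⟩ | ⟨rfl, rfl⟩ | ⟨rfl, rfl⟩) <;>
        constructor <;> grind

/-- For every prime `p > 5`, the polynomial `P_5` reduced modulo `p` has exactly 16
critical points over an algebraic closure of `𝔽_p`. -/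
theorem card_critical_points_mod_p {K : Type*} [Field K] [IsAlgClosed K]
    (p : ℕ) (hp : p.Prime) [CharP K p] (hp5 : 5 < p) :
    {q : K × K | eval ![q.1, q.2] (pderiv 0 (P5 K)) = 0 ∧
      eval ![q.1, q.2] (pderiv 1 (P5 K)) = 0}.ncard = 16 := by
  classical
  have hne : ∀ n : ℕ, 0 < n → n ≤ 5 → (n : K) ≠ 0 := fun n h0 hn h => by
    have := Nat.le_of_dvd h0 ((CharP.cast_eq_zero_iff K p n).mp h)
    omega
  have h2 : (2 : K) ≠ 0 := by exact_mod_cast hne 2 (by norm_num) (by norm_num)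
  have h3 : (3 : K) ≠ 0 := by exact_mod_cast hne 3 (by norm_num) (by norm_num)
  have h5 : (5 : K) ≠ 0 := by exact_mod_cast hne 5 (by norm_num) (by norm_num)
  obtain ⟨φ, hφ⟩ : ∃ φ : K, φ ^ 2 = φ + 1 := by
    obtain ⟨r, hr⟩ := IsAlgClosed.exists_pow_nat_eq (5 : K) (n := 2) (by norm_num)
    refine ⟨(1 + r) / 2, ?_⟩
    field_simp
    linear_combination hr
  choose! A hA2 hA using fun t (ht : t ∈ offDiagValues φ) =>
    exists_fiber h2 t (disc_ne_zero h2 h3 h5 hφ ht)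
  have hset : {q : K × K | eval ![q.1, q.2] (pderiv 0 (P5 K)) = 0 ∧
      eval ![q.1, q.2] (pderiv 1 (P5 K)) = 0} =
      (((diagValues φ).image fun x => (x, x)) ∪ (offDiagValues φ).biUnion A :
        Finset (K × K)) := by
    ext ⟨x, y⟩
    simp only [Set.mem_ofPred_eq]
    rw [critical_iff h5, critical_solve h2 h3 h5 hφ, Finset.mem_coe, Finset.mem_union,
      Finset.mem_image, Finset.mem_biUnion]
    refine or_congr ?_ ?_
    · simp only [Prod.mk.injEq]
      constructor
      · rintro ⟨rfl, h⟩
        exact ⟨x, h, rfl, rfl⟩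
      · rintro ⟨a, h, rfl, rfl⟩
        exact ⟨rfl, h⟩
    · constructor
      · intro h
        exact ⟨_, h, (hA _ h _).mpr rfl⟩
      · rintro ⟨t, ht, hq⟩
        rw [← (hA t ht _).mp hq] at ht
        exact ht
  have hdisj : Disjoint ((diagValues φ).image fun x => (x, x)) ((offDiagValues φ).biUnion A) := by
    rw [Finset.disjoint_left]
    intro q hq hq'
    obtain ⟨x, -, rfl⟩ := Finset.mem_image.mp hq
    obtain ⟨t, ht, hx⟩ := Finset.mem_biUnion.mp hq'
    have := (hA t ht _).mp hx
    subst this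
    exact disc_ne_zero h2 h3 h5 hφ ht (by ring)
  have hpair : ((offDiagValues φ : Finset (K × K)) : Set (K × K)).PairwiseDisjoint A := by
    intro t ht t' ht' hne
    refine Finset.disjoint_left.mpr fun q hq hq' => hne ?_
    rw [← (hA t ht q).mp hq, ← (hA t' ht' q).mp hq']
  rw [hset, Set.ncard_coe_finset, Finset.card_union_of_disjoint hdisj,
    Finset.card_image_of_injective _ (fun a b h => (Prod.mk.inj h).1),
    Finset.card_biUnion hpair, Finset.sum_congr rfl hA2, card_diagValues h2 h5 hφ,
    Finset.sum_const, card_offDiagValues h2 h5 hφ]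
  rfl
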